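/- arXiv:2102.09540 — 6 statements merged into one kernel-verified Lean document; each statement's English description precedes it below -/
import Mathlib

section
/- Let ψ = 2 − 4·ln(2). For every real number x with x ≥ −1/2, we have ln(1+x) ≥ x + ψ·x². -/
/-!
Write the Taylor remainder of `log` as
`log (1 + x) = x - x ^ 2 * ∫ t in 0..1, t / (1 + x * t)`. The integrand decreases in `x`, so
`(log (1 + x) - x) / x ^ 2` increases on `x > -1`; its value at `x = -1 / 2` is `2 - 4 * log 2`.
-/

open Set

lemma one_add_mul_pos {R : Type*} [CommRing R] [LinearOrder R] [IsStrictOrderedRing R] {x t : R}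
    (hx : -1 < x) (ht : t ∈ Icc (0 : R) 1) : 0 < 1 + x * t := by
  rcases ht.1.eq_or_lt with rfl | ht_pos
  · simp
  · nlinarith [ht.2, mul_lt_mul_of_pos_right hx ht_pos]

lemma intervalIntegrable_div_one_add_mul {x : ℝ} (hx : -1 < x) :
    IntervalIntegrable (fun t : ℝ ↦ t / (1 + x * t)) MeasureTheory.volume 0 1 := by
  refine ContinuousOn.intervalIntegrable_of_Icc zero_le_one ?_
  exact continuousOn_id.div (by fun_prop) fun t ht ↦ (one_add_mul_pos hx ht).ne'

lemma antitoneOn_integral_div_one_add_mul :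
    AntitoneOn (fun x : ℝ ↦ ∫ t in (0 : ℝ)..1, t / (1 + x * t)) (Ioi (-1)) := by
  intro x hx y hy hxy
  refine intervalIntegral.integral_mono_on zero_le_one (intervalIntegrable_div_one_add_mul hy)
    (intervalIntegrable_div_one_add_mul hx) fun t ht ↦ ?_
  exact div_le_div_of_nonneg_left ht.1 (one_add_mul_pos hx ht)
    (add_le_add_right (mul_le_mul_of_nonneg_right hxy ht.1) 1)

lemma log_one_add_eq_sub_sq_mul_integral {x : ℝ} (hx : -1 < x) :
    Real.log (1 + x) = x - x ^ 2 * ∫ t in (0 : ℝ)..1, t / (1 + x * t) := by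
  have hderiv : ∀ t ∈ uIcc (0 : ℝ) 1,
      HasDerivAt (fun s ↦ x * s - Real.log (1 + x * s)) (x ^ 2 * (t / (1 + x * t))) t := by
    intro t ht
    have hpos : 0 < 1 + x * t := one_add_mul_pos hx (uIcc_of_le (zero_le_one' ℝ) ▸ ht)
    have hlin : HasDerivAt (fun s ↦ x * s) x t := hasDerivAt_const_mul x
    refine (hlin.sub ((hlin.const_add 1).log hpos.ne')).congr_deriv ?_
    field_simp
    ring
  have hFTC := intervalIntegral.integral_eq_sub_of_hasDerivAt hderiv
    ((intervalIntegrable_div_one_add_mul hx).const_mul (x ^ 2))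
  simp only [intervalIntegral.integral_const_mul, mul_one, mul_zero, add_zero, Real.log_one,
    sub_zero] at hFTC
  linarith

theorem quad_log_lower_bound_general {a x : ℝ} (ha : -1 < a) (ha₀ : a ≠ 0) (hax : a ≤ x) :
    x + (Real.log (1 + a) - a) / a ^ 2 * x ^ 2 ≤ Real.log (1 + x) := by
  have hx : -1 < x := ha.trans_le hax
  have hcoeff : (Real.log (1 + a) - a) / a ^ 2 = -∫ t in (0 : ℝ)..1, t / (1 + a * t) := by
    rw [log_one_add_eq_sub_sq_mul_integral ha]
    field_simp
    ring
  calc x + (Real.log (1 + a) - a) / a ^ 2 * x ^ 2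
      = x - x ^ 2 * ∫ t in (0 : ℝ)..1, t / (1 + a * t) := by rw [hcoeff]; ring
    _ ≤ x - x ^ 2 * ∫ t in (0 : ℝ)..1, t / (1 + x * t) := by
        gcongr x - x ^ 2 * ?_
        exact antitoneOn_integral_div_one_add_mul ha hx hax
    _ = Real.log (1 + x) := (log_one_add_eq_sub_sq_mul_integral hx).symm

lemma log_one_add_sub_self_div_sq_neg_half :
    (Real.log (1 + -(1 / 2)) - -(1 / 2)) / (-(1 / 2)) ^ 2 = 2 - 4 * Real.log 2 := by
  have hlog : Real.log (1 + -(1 / 2)) = -Real.log 2 := by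
    rw [← Real.log_inv]
    norm_num
  rw [hlog]
  ring

theorem quad_log_lower_bound (x : ℝ) (hx : x ≥ -(1/2)) :
    Real.log (1 + x) ≥ x + (2 - 4 * Real.log 2) * x ^ 2 := by
  rw [← log_one_add_sub_self_div_sq_neg_half]
  exact quad_log_lower_bound_general (by norm_num) (by norm_num) hx
end

section
/- The function f(x) = (ln(1+x) − x)/x² is monotone increasing on its domain: for all real numbers x, y with −1 < x ≤ y, x ≠ 0 and y ≠ 0, we have (ln(1+x) − x)/x² ≤ (ln(1+y) − y)/y². -/
/-!
Suppose `F` has derivative `(t - a) ^ n * g t` with `g` monotone, and put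
`r x s = (F (a + s * (x - a)) - F a) / (x - a) ^ (n + 1)`. Dividing by `(x - a) ^ (n + 1)` cancels
every power of `x - a`, so `∂r/∂s = s ^ n * g (a + s * (x - a))`, which for `s ≥ 0` is monotone
in `x`, across `a` as well as on each side of it. Since `r x 0 = 0` for all `x`, it follows that
`r x 1 = (F x - F a) / (x - a) ^ (n + 1)` is monotone in `x`. For the logarithm take
`F u = log u - u`, `a = 1` and `n = 1`, so that `F` has derivative `u⁻¹ - 1 = (u - 1) * (-u⁻¹)`.
-/

open Set AffineMap

section IncrementDivPow

variable {F g : ℝ → ℝ} {S : Set ℝ} {a : ℝ} {n : ℕ}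

theorem hasDerivWithinAt_lineMap_sub_div_pow {x s c : ℝ} {T : Set ℝ} (hxa : x ≠ a)
    (hF : HasDerivWithinAt F ((lineMap a x s - a) ^ n * c) S (lineMap a x s))
    (hT : MapsTo (lineMap a x) T S) :
    HasDerivWithinAt (fun s ↦ (F (lineMap a x s) - F a) / (x - a) ^ (n + 1)) (s ^ n * c) T s := by
  have hxa' : x - a ≠ 0 := sub_ne_zero.mpr hxa
  have hline : lineMap a x s - a = s * (x - a) := lineMap_vsub_left a x s
  refine (((hF.comp s hasDerivWithinAt_lineMap hT).sub_const (F a)).div_const _).congr_deriv ?_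
  rw [div_eq_iff (pow_ne_zero (n + 1) hxa'), hline, mul_pow]
  ring

theorem monotoneOn_sub_div_pow_of_hasDerivWithinAt (hS : Convex ℝ S) (ha : a ∈ S)
    (hF : ∀ t ∈ S, HasDerivWithinAt F ((t - a) ^ n * g t) S t) (hg : MonotoneOn g S) :
    MonotoneOn (fun x ↦ (F x - F a) / (x - a) ^ (n + 1)) (S \ {a}) := by
  intro x hx y hy hxy
  let r (z s : ℝ) : ℝ := (F (lineMap a z s) - F a) / (z - a) ^ (n + 1)
  have hline {z : ℝ} (hz : z ∈ S) : MapsTo (lineMap a z) (Icc (0 : ℝ) 1) S :=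
    hS.mapsTo_lineMap ha hz
  have hr {z : ℝ} (hz : z ∈ S \ {a}) {s : ℝ} (hs : s ∈ Icc (0 : ℝ) 1) :
      HasDerivWithinAt (r z) (s ^ n * g (lineMap a z s)) (Icc 0 1) s :=
    hasDerivWithinAt_lineMap_sub_div_pow hz.2 (hF _ (hline hz.1 hs)) (hline hz.1)
  have hderiv_le {s : ℝ} (hs : s ∈ Icc (0 : ℝ) 1) :
      s ^ n * g (lineMap a x s) ≤ s ^ n * g (lineMap a y s) :=
    mul_le_mul_of_nonneg_left
      (hg (hline hx.1 hs) (hline hy.1 hs) (lineMap_mono_right hxy hs.1)) (pow_nonneg hs.1 n)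
  have hmono : MonotoneOn (r y - r x) (Icc 0 1) :=
    monotoneOn_of_hasDerivWithinAt_nonneg (convex_Icc 0 1)
      (fun s hs ↦ ((hr hy hs).sub (hr hx hs)).continuousWithinAt)
      (fun s hs ↦ ((hr hy (interior_subset hs)).sub (hr hx (interior_subset hs))).mono
        interior_subset)
      (fun s hs ↦ sub_nonneg.mpr (hderiv_le (interior_subset hs)))
  have hincr : (r y - r x) 0 ≤ (r y - r x) 1 :=
    hmono (left_mem_Icc.mpr zero_le_one) (right_mem_Icc.mpr zero_le_one) zero_le_one
  simpa [r] using hincr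

end IncrementDivPow

theorem monotoneOn_log_sub_div_sq :
    MonotoneOn (fun u : ℝ ↦ (Real.log u - (u - 1)) / (u - 1) ^ 2) (Ioi 0 \ {1}) := by
  have hderiv : ∀ u ∈ Ioi (0 : ℝ),
      HasDerivWithinAt (fun u ↦ Real.log u - u) ((u - 1) ^ 1 * -u⁻¹) (Ioi 0) u := by
    intro u hu
    have hu0 : u ≠ 0 := ne_of_gt hu
    refine ((Real.hasDerivAt_log hu0).sub (hasDerivAt_id u)).hasDerivWithinAt.congr_deriv ?_
    field_simp
    ring
  have hinv : MonotoneOn (fun u : ℝ ↦ -u⁻¹) (Ioi 0) := inv_antitoneOn_Ioi.neg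
  refine (monotoneOn_sub_div_pow_of_hasDerivWithinAt (convex_Ioi 0) (mem_Ioi.mpr one_pos)
    hderiv hinv).congr fun u _ ↦ ?_
  simp [sub_add]

theorem log_ratio_monotone (x y : ℝ) (hx : -1 < x) (hxy : x ≤ y) (hx0 : x ≠ 0) (hy0 : y ≠ 0) :
    (Real.log (1 + x) - x) / x ^ 2 ≤ (Real.log (1 + y) - y) / y ^ 2 := by
  have one_add_mem {z : ℝ} (hz : -1 < z) (hz0 : z ≠ 0) : 1 + z ∈ Ioi (0 : ℝ) \ {1} :=
    ⟨neg_lt_iff_pos_add'.mp hz, by simpa using hz0⟩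
  simpa using monotoneOn_log_sub_div_sq (one_add_mem hx hx0) (one_add_mem (hx.trans_le hxy) hy0)
    (add_le_add_right hxy 1)
end

section
/- In the setting of the reward-predictor martingale result (adapted (w_t, r_t, c_t) with w_t ∈ [0,w_max], r_t ∈ [0,1], c_t ∈ [−1,w_max], conditional means E[w_t|F_{t−1}]=1, E[w_t r_t|F_{t−1}]=v*, E[c_t|F_{t−1}]=0, and predictable uniformly bounded bets λ_{1,t}, λ_{2,t} with 1 + λ_{1,t}(w_t−1) + λ_{2,t}(w_t r_t − c_t − v*) ≥ 0 a.s.), for every α ∈ (0,1] the process K_t^q(v) = ∏_{i=1}^t (1 + λ_{1,i}(w_i−1) + λ_{2,i}(w_i r_i − c_i − v)) satisfies P(∃ t ≥ 1 : K_t^q(v*) > 1/α) ≤ α; equivalently the sets C_t^q = {v ∈ [0,1] : K_t^q(v) ≤ 1/α} and their running intersections ∩_{i≤t} C_i^q are (1−α)-confidence sequences for v*. -/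
open MeasureTheory Finset

/-!
At the true parameter the capital process multiplies by `1 + ⟨bet, payoff⟩`, where the bet is
predictable and the payoff has conditional mean zero, so it is formally a martingale. Neither the
bets nor the payoffs have to be bounded for this: truncating to the event that the bet is small
gives the right integral, and since the capital is nonnegative the truncation can be removed by
monotone convergence. Ville's inequality then bounds the probability that the capital, which starts
at `1`, ever reaches `1 / α`.
-/

section ConditionalExpectation

variable {Ω E F : Type*} {m m0 : MeasurableSpace Ω} {μ : Measure Ω}
  [NormedAddCommGroup E] [NormedSpace ℝ E] [CompleteSpace E]
  [NormedAddCommGroup F] [NormedSpace ℝ F] [CompleteSpace F]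

theorem condExp_prodMk_ae_eq {X : Ω → E} {Y : Ω → F} (hX : Integrable X μ) (hY : Integrable Y μ) :
    μ[fun ω ↦ (X ω, Y ω) | m] =ᵐ[μ] fun ω ↦ (μ[X | m] ω, μ[Y | m] ω) := by
  filter_upwards [(ContinuousLinearMap.fst ℝ E F).comp_condExp_comm (hX.prodMk hY) (m := m),
    (ContinuousLinearMap.snd ℝ E F).comp_condExp_comm (hX.prodMk hY) (m := m)] with ω hfst hsnd
  exact Prod.ext hfst hsnd

theorem condExp_sub_const_ae_eq_zero [IsFiniteMeasure μ] (hm : m ≤ m0) {X : Ω → E} {x : E}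
    (hX : Integrable X μ) (hXx : μ[X | m] =ᵐ[μ] fun _ ↦ x) : μ[fun ω ↦ X ω - x | m] =ᵐ[μ] 0 := by
  have hsub := condExp_sub hX (integrable_const x) m
  rw [condExp_const hm] at hsub
  filter_upwards [hsub, hXx] with ω hω hωx
  exact hω.trans (by simp [hωx])

theorem condExp_clm_apply_ae_eq_zero {H : Ω → StrongDual ℝ E} {Y : Ω → E}
    (hH : StronglyMeasurable[m] H) (hY : Integrable Y μ)
    (hHY : Integrable (fun ω ↦ H ω (Y ω)) μ) (hY0 : μ[Y | m] =ᵐ[μ] 0) :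
    μ[fun ω ↦ H ω (Y ω) | m] =ᵐ[μ] 0 := by
  filter_upwards [condExp_bilin_of_stronglyMeasurable_left
    (ContinuousLinearMap.id ℝ (StrongDual ℝ E)) hH hHY hY, hY0] with ω hpull hω
  exact hpull.trans (by simp [hω])

omit [CompleteSpace E] in
theorem integrableOn_clm_apply_of_norm_le {s : Set Ω} {H : Ω → StrongDual ℝ E} {Y : Ω → E}
    (hs : MeasurableSet s) (hH : StronglyMeasurable H) (hY : Integrable Y μ) (C : ℝ)
    (hC : ∀ ω ∈ s, ‖H ω‖ ≤ C) : IntegrableOn (fun ω ↦ H ω (Y ω)) s μ :=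
  (ContinuousLinearMap.id ℝ (StrongDual ℝ E)).integrable_of_bilin_of_bdd_left C
    hH.aestronglyMeasurable (ae_restrict_of_forall_mem hs hC) hY.integrableOn

theorem setIntegral_clm_apply_eq_zero_of_norm_le (hm : m ≤ m0) [SigmaFinite (μ.trim hm)]
    {s : Set Ω} {H : Ω → StrongDual ℝ E} {Y : Ω → E} (hs : MeasurableSet[m] s)
    (hH : StronglyMeasurable[m] H) (hY : Integrable Y μ) (C : ℝ) (hC : ∀ ω ∈ s, ‖H ω‖ ≤ C)
    (hY0 : μ[Y | m] =ᵐ[μ] 0) : ∫ ω in s, H ω (Y ω) ∂μ = 0 := by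
  have hind : (s.indicator fun ω ↦ H ω (Y ω)) = fun ω ↦ s.indicator H ω (Y ω) := by
    ext ω
    by_cases hω : ω ∈ s <;> simp [hω]
  have hint : Integrable (fun ω ↦ s.indicator H ω (Y ω)) μ := by
    rw [← hind, integrable_indicator_iff (hm s hs)]
    exact integrableOn_clm_apply_of_norm_le (hm s hs) (hH.mono hm) hY C hC
  rw [← integral_indicator (hm s hs), hind, ← integral_condExp hm]
  exact integral_eq_zero_of_ae (condExp_clm_apply_ae_eq_zero (hH.indicator hs) hY hint hY0)

theorem integrable_add_clm_apply_of_nonneg (hm : m ≤ m0) [SigmaFinite (μ.trim hm)] {A : Ω → ℝ}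
    {H : Ω → StrongDual ℝ E} {Y : Ω → E} (hA : Integrable A μ)
    (hH : StronglyMeasurable[m] H) (hY : Integrable Y μ) (hY0 : μ[Y | m] =ᵐ[μ] 0)
    (hnonneg : 0 ≤ᵐ[μ] fun ω ↦ A ω + H ω (Y ω)) : Integrable (fun ω ↦ A ω + H ω (Y ω)) μ := by
  let s : ℕ → Set Ω := fun n ↦ {ω | ‖H ω‖ ≤ n}
  have hs (n : ℕ) : MeasurableSet[m] (s n) := hH.norm.measurable measurableSet_Iic
  have hcover : AECover μ Filter.atTop s :=
    { ae_eventually_mem := ae_of_all _ fun ω ↦ by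
        filter_upwards [Filter.eventually_ge_atTop ⌈‖H ω‖⌉₊] with n hn
        exact Nat.ceil_le.mp hn
      measurableSet := fun n ↦ hm _ (hs n) }
  have hint (n : ℕ) : IntegrableOn (fun ω ↦ H ω (Y ω)) (s n) μ :=
    integrableOn_clm_apply_of_norm_le (hm _ (hs n)) (hH.mono hm) hY n fun _ hω ↦ hω
  refine hcover.integrable_of_integral_bounded_of_nonneg_ae (∫ ω, ‖A ω‖ ∂μ)
    (fun n ↦ hA.integrableOn.add (hint n)) hnonneg (Filter.Eventually.of_forall fun n ↦ ?_)
  calc ∫ ω in s n, A ω + H ω (Y ω) ∂μ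
      = ∫ ω in s n, A ω ∂μ := by
        rw [integral_add hA.integrableOn (hint n),
          setIntegral_clm_apply_eq_zero_of_norm_le hm (hs n) hH hY n (fun _ hω ↦ hω) hY0, add_zero]
    _ ≤ ∫ ω in s n, ‖A ω‖ ∂μ :=
        integral_mono hA.integrableOn hA.norm.integrableOn fun ω ↦ le_abs_self (A ω)
    _ ≤ ∫ ω, ‖A ω‖ ∂μ := setIntegral_le_integral hA.norm (ae_of_all _ fun _ ↦ norm_nonneg _)

theorem condExp_add_clm_apply_ae_eq (hm : m ≤ m0) [SigmaFinite (μ.trim hm)] {A : Ω → ℝ}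
    {H : Ω → StrongDual ℝ E} {Y : Ω → E} (hAm : StronglyMeasurable[m] A) (hA : Integrable A μ)
    (hH : StronglyMeasurable[m] H) (hY : Integrable Y μ) (hY0 : μ[Y | m] =ᵐ[μ] 0)
    (hint : Integrable (fun ω ↦ A ω + H ω (Y ω)) μ) :
    μ[fun ω ↦ A ω + H ω (Y ω) | m] =ᵐ[μ] A := by
  have hHY : Integrable (fun ω ↦ H ω (Y ω)) μ := by
    simpa [Pi.sub_def] using hint.sub hA
  have hadd := condExp_add hA hHY m
  rw [condExp_of_stronglyMeasurable hm hAm hA] at hadd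
  filter_upwards [hadd, condExp_clm_apply_ae_eq_zero hH hY hHY hY0] with ω hω hω0
  exact hω.trans (by simp [hω0])

end ConditionalExpectation

section Wealth

variable {Ω E : Type*} [NormedAddCommGroup E] [NormedSpace ℝ E]

/-- The capital after round `t` of a gambler who starts with capital `1` and in round `i` stakes the
multiple `H i` of the current capital on the vector-valued payoff `Y i`. Rounds are numbered from
`1`, so the values of `H` and `Y` at `0` play no role. -/
def wealth (H : ℕ → Ω → StrongDual ℝ E) (Y : ℕ → Ω → E) (t : ℕ) (ω : Ω) : ℝ :=
  ∏ i ∈ Icc 1 t, (1 + H i ω (Y i ω))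

variable {m0 : MeasurableSpace Ω} {μ : Measure Ω} {ℱ : Filtration ℕ m0}
  {H : ℕ → Ω → StrongDual ℝ E} {Y : ℕ → Ω → E}

theorem wealth_zero : wealth H Y 0 = 1 := by
  ext ω
  simp [wealth]

theorem wealth_succ (t : ℕ) :
    wealth H Y (t + 1) =
      fun ω ↦ wealth H Y t ω + (wealth H Y t ω • H (t + 1) ω) (Y (t + 1) ω) := by
  ext ω
  rw [wealth, prod_Icc_succ_top (Nat.le_add_left 1 t), ← wealth, mul_one_add]
  rfl

theorem wealth_nonneg (hnonneg : ∀ᵐ ω ∂μ, ∀ t, 0 ≤ 1 + H (t + 1) ω (Y (t + 1) ω)) (t : ℕ) :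
    0 ≤ᵐ[μ] wealth H Y t := by
  filter_upwards [hnonneg] with ω hω
  refine prod_nonneg fun i hi ↦ ?_
  obtain ⟨j, rfl⟩ := Nat.exists_eq_add_of_le' (mem_Icc.mp hi).1
  exact hω j

theorem stronglyAdapted_wealth (hH : ∀ t, StronglyMeasurable[ℱ t] (H (t + 1)))
    (hYm : ∀ t, StronglyMeasurable[ℱ (t + 1)] (Y (t + 1))) : StronglyAdapted ℱ (wealth H Y) := by
  intro t
  induction t with
  | zero => exact wealth_zero (H := H) (Y := Y) ▸ stronglyMeasurable_one
  | succ t ih =>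
    have hle := ℱ.mono t.le_succ
    rw [wealth_succ]
    exact (ih.mono hle).add <| isBoundedBilinearMap_apply.continuous.comp_stronglyMeasurable <|
      ((ih.smul (hH t)).mono hle).prodMk (hYm t)

theorem martingale_wealth [CompleteSpace E] [IsFiniteMeasure μ]
    (hH : ∀ t, StronglyMeasurable[ℱ t] (H (t + 1)))
    (hYm : ∀ t, StronglyMeasurable[ℱ (t + 1)] (Y (t + 1)))
    (hY : ∀ t, Integrable (Y (t + 1)) μ) (hY0 : ∀ t, μ[Y (t + 1) | ℱ t] =ᵐ[μ] 0)
    (hnonneg : ∀ᵐ ω ∂μ, ∀ t, 0 ≤ 1 + H (t + 1) ω (Y (t + 1) ω)) :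
    Martingale (wealth H Y) ℱ μ := by
  have hadapted := stronglyAdapted_wealth hH hYm
  have hstake (t : ℕ) : StronglyMeasurable[ℱ t] fun ω ↦ wealth H Y t ω • H (t + 1) ω :=
    (hadapted t).smul (hH t)
  have hint (t : ℕ) : Integrable (wealth H Y t) μ := by
    induction t with
    | zero => exact wealth_zero (H := H) (Y := Y) ▸ integrable_const 1
    | succ t ih =>
      have hpos := wealth_nonneg hnonneg (t + 1)
      rw [wealth_succ] at hpos ⊢
      exact integrable_add_clm_apply_of_nonneg (ℱ.le t) ih (hstake t) (hY t) (hY0 t) hpos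
  refine martingale_nat hadapted hint fun t ↦ ?_
  have hint_succ := hint (t + 1)
  rw [wealth_succ] at hint_succ ⊢
  exact (condExp_add_clm_apply_ae_eq (ℱ.le t) (hadapted t) (hint t) (hstake t) (hY t) (hY0 t)
    hint_succ).symm

end Wealth

section Ville

variable {Ω : Type*} {m0 : MeasurableSpace Ω} {μ : Measure Ω} [IsFiniteMeasure μ]
  {ℱ : Filtration ℕ m0} {M : ℕ → Ω → ℝ}

theorem mul_measure_exists_ge_le_of_submartingale (hM : Submartingale M ℱ μ) {R : ℝ}
    (hR : ∀ t, ∫ ω, (M t ω)⁺ ∂μ ≤ R) (ε : NNReal) :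
    ε * μ {ω | ∃ t, ε ≤ M t ω} ≤ ENNReal.ofReal R := by
  let S : ℕ → Set Ω := fun n ↦
    {ω | (ε : ℝ) ≤ (range (n + 1)).sup' nonempty_range_add_one fun t ↦ (M⁺) t ω}
  have hS_mono : Monotone S := fun a b hab ω hω ↦ le_trans (α := ℝ) hω <|
    sup'_mono (fun t ↦ (M⁺) t ω) (range_mono (Nat.succ_le_succ hab)) nonempty_range_add_one
  have hS_cover : {ω | ∃ t, ε ≤ M t ω} ⊆ ⋃ n, S n := by
    rintro ω ⟨t, ht⟩
    exact Set.mem_iUnion.mpr ⟨t, (ht.trans (le_posPart (M t ω))).trans <|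
      le_sup' (fun t ↦ (M⁺) t ω) (self_mem_range_succ t)⟩
  have hS_le (n : ℕ) : ε * μ (S n) ≤ ENNReal.ofReal R :=
    calc ε * μ (S n) ≤ ENNReal.ofReal (∫ ω in S n, (M⁺) n ω ∂μ) :=
          maximal_ineq hM.pos (posPart_nonneg M) n
      _ ≤ ENNReal.ofReal R := ENNReal.ofReal_le_ofReal <|
          (setIntegral_le_integral (hM.pos.integrable n)
            (ae_of_all _ fun ω ↦ posPart_nonneg (M n ω))).trans (hR n)
  calc ε * μ {ω | ∃ t, ε ≤ M t ω} ≤ ε * μ (⋃ n, S n) := by gcongr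
    _ = ⨆ n, ε * μ (S n) := by rw [hS_mono.measure_iUnion, ENNReal.mul_iSup]
    _ ≤ ENNReal.ofReal R := iSup_le hS_le

theorem ville_inequality (hM : Martingale M ℱ μ) (hnonneg : ∀ t, 0 ≤ᵐ[μ] M t) (ε : NNReal) :
    ε * μ {ω | ∃ t, ε ≤ M t ω} ≤ ENNReal.ofReal (∫ ω, M 0 ω ∂μ) := by
  refine mul_measure_exists_ge_le_of_submartingale hM.submartingale (fun t ↦ le_of_eq ?_) ε
  calc ∫ ω, (M t ω)⁺ ∂μ = ∫ ω, M t ω ∂μ :=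
        integral_congr_ae ((hnonneg t).mono fun _ ↦ posPart_of_nonneg)
    _ = ∫ ω, M 0 ω ∂μ := by
        simpa using (hM.setIntegral_eq t.zero_le MeasurableSet.univ).symm

end Ville

theorem measure_exists_inv_le_wealth_le {Ω E : Type*} {m0 : MeasurableSpace Ω} {P : Measure Ω}
    [IsProbabilityMeasure P] {ℱ : Filtration ℕ m0} [NormedAddCommGroup E] [NormedSpace ℝ E]
    [CompleteSpace E] {H : ℕ → Ω → StrongDual ℝ E} {Y : ℕ → Ω → E}
    (hH : ∀ t, StronglyMeasurable[ℱ t] (H (t + 1)))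
    (hYm : ∀ t, StronglyMeasurable[ℱ (t + 1)] (Y (t + 1)))
    (hY : ∀ t, Integrable (Y (t + 1)) P) (hY0 : ∀ t, P[Y (t + 1) | ℱ t] =ᵐ[P] 0)
    (hnonneg : ∀ᵐ ω ∂P, ∀ t, 0 ≤ 1 + H (t + 1) ω (Y (t + 1) ω)) {α : ℝ} (hα : 0 < α) :
    P {ω | ∃ t, α⁻¹ ≤ wealth H Y t ω} ≤ ENNReal.ofReal α := by
  have hville := ville_inequality (martingale_wealth hH hYm hY hY0 hnonneg)
    (wealth_nonneg hnonneg) α⁻¹.toNNReal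
  have hstart : ENNReal.ofReal (∫ ω, wealth H Y 0 ω ∂P) = 1 := by simp [wealth_zero]
  have hinv : ((α⁻¹.toNNReal : NNReal) : ENNReal) = (ENNReal.ofReal α)⁻¹ :=
    ENNReal.ofReal_inv_of_pos hα
  rw [Real.coe_toNNReal _ (inv_pos.mpr hα).le, hstart, hinv] at hville
  simpa using ENNReal.le_inv_iff_mul_le.mpr ((mul_comm _ _).trans_le hville)

theorem exists_notMem_biInter_Iic {ι X : Type*} [Preorder ι] {C : ι → Set X} {x : X} :
    (∃ t, x ∉ ⋂ i ∈ Set.Iic t, C i) ↔ ∃ t, x ∉ C t := by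
  simp only [Set.mem_iInter, not_forall, Set.mem_Iic]
  exact ⟨fun ⟨_, i, _, hi⟩ ↦ ⟨i, hi⟩, fun ⟨t, ht⟩ ↦ ⟨t, t, le_rfl, ht⟩⟩

section RewardPredictor

variable {Ω : Type*}

/-- The bets `(lam1, lam2)` on a pair of scalar payoffs, as functionals on `ℝ × ℝ`. -/
def linearBet (lam1 lam2 : ℕ → Ω → ℝ) (t : ℕ) (ω : Ω) : StrongDual ℝ (ℝ × ℝ) :=
  lam1 t ω • ContinuousLinearMap.fst ℝ ℝ ℝ + lam2 t ω • ContinuousLinearMap.snd ℝ ℝ ℝ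

/-- The pair of payoffs bet on when testing the value `v`: the centred importance weight, and the
importance-weighted reward corrected by the control variate `c` and centred at `v`. -/
def rewardPayoff (w r c : ℕ → Ω → ℝ) (v : ℝ) (t : ℕ) (ω : Ω) : ℝ × ℝ :=
  (w t ω - 1, w t ω * r t ω - c t ω - v)

variable {m m0 : MeasurableSpace Ω} {μ : Measure Ω} {lam1 lam2 w r c : ℕ → Ω → ℝ} {v : ℝ} {t : ℕ}

theorem one_add_linearBet_apply_rewardPayoff (ω : Ω) :
    1 + linearBet lam1 lam2 t ω (rewardPayoff w r c v t ω) =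
      1 + lam1 t ω * (w t ω - 1) + lam2 t ω * (w t ω * r t ω - c t ω - v) := by
  simp [linearBet, rewardPayoff, add_assoc]

theorem stronglyMeasurable_linearBet (h1 : StronglyMeasurable[m] (lam1 t))
    (h2 : StronglyMeasurable[m] (lam2 t)) : StronglyMeasurable[m] (linearBet lam1 lam2 t) :=
  (h1.smul_const _).add (h2.smul_const _)

theorem stronglyMeasurable_rewardPayoff (hw : StronglyMeasurable[m] (w t))
    (hr : StronglyMeasurable[m] (r t)) (hc : StronglyMeasurable[m] (c t)) :
    StronglyMeasurable[m] (rewardPayoff w r c v t) :=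
  (hw.sub stronglyMeasurable_const).prodMk
    (((hw.mul hr).sub hc).sub stronglyMeasurable_const)

theorem integrable_rewardPayoff [IsFiniteMeasure μ] (hw : Integrable (w t) μ)
    (hwr : Integrable (fun ω ↦ w t ω * r t ω) μ) (hc : Integrable (c t) μ) :
    Integrable (rewardPayoff w r c v t) μ :=
  (hw.sub (integrable_const 1)).prodMk ((hwr.sub hc).sub (integrable_const v))

theorem condExp_rewardPayoff_ae_eq_zero [IsFiniteMeasure μ] (hm : m ≤ m0)
    (hw : Integrable (w t) μ) (hwr : Integrable (fun ω ↦ w t ω * r t ω) μ)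
    (hc : Integrable (c t) μ) (hcondw : μ[w t | m] =ᵐ[μ] fun _ ↦ 1)
    (hcondwr : μ[fun ω ↦ w t ω * r t ω | m] =ᵐ[μ] fun _ ↦ v)
    (hcondc : μ[c t | m] =ᵐ[μ] fun _ ↦ 0) : μ[rewardPayoff w r c v t | m] =ᵐ[μ] 0 := by
  have hcondwrc : μ[fun ω ↦ w t ω * r t ω - c t ω | m] =ᵐ[μ] fun _ ↦ v := by
    filter_upwards [condExp_sub hwr hc m, hcondwr, hcondc] with ω hsub hωwr hωc
    exact hsub.trans (by simp [hωwr, hωc])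
  filter_upwards [
    condExp_prodMk_ae_eq (m := m) (hw.sub (integrable_const 1))
      ((hwr.sub hc).sub (integrable_const v)),
    condExp_sub_const_ae_eq_zero hm hw hcondw,
    condExp_sub_const_ae_eq_zero hm (hwr.sub hc) hcondwrc] with ω hpair hfst hsnd
  exact hpair.trans (Prod.ext hfst hsnd)

end RewardPredictor

theorem integrable_of_stronglyMeasurable_of_mem_Icc {Ω : Type*} {m m0 : MeasurableSpace Ω}
    {μ : Measure Ω} [IsFiniteMeasure μ] (hm : m ≤ m0) {X : Ω → ℝ} {a b : ℝ}
    (hX : StronglyMeasurable[m] X) (hab : ∀ ω, X ω ∈ Set.Icc a b) : Integrable X μ :=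
  .of_mem_Icc a b (hX.mono hm).measurable.aemeasurable (ae_of_all μ hab)

theorem reward_predictor_confidence_sequence_general
    {Ω : Type*} {m0 : MeasurableSpace Ω} {P : Measure Ω} [IsProbabilityMeasure P]
    (ℱ : Filtration ℕ m0) (w r c : ℕ → Ω → ℝ)
    (hadapted : ∀ t : ℕ, StronglyMeasurable[ℱ (t + 1)] (w (t + 1)) ∧
      StronglyMeasurable[ℱ (t + 1)] (r (t + 1)) ∧
      StronglyMeasurable[ℱ (t + 1)] (c (t + 1)))
    (hw : ∀ t : ℕ, Integrable (w (t + 1)) P)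
    (hwr : ∀ t : ℕ, Integrable (fun ω ↦ w (t + 1) ω * r (t + 1) ω) P)
    (hc : ∀ t : ℕ, Integrable (c (t + 1)) P)
    (V : Set ℝ) (vstar : ℝ) (hvstar : vstar ∈ V)
    (hcondw : ∀ t : ℕ, P[w (t + 1) | ℱ t] =ᵐ[P] fun _ ↦ 1)
    (hcondwr : ∀ t : ℕ, P[fun ω ↦ w (t + 1) ω * r (t + 1) ω | ℱ t] =ᵐ[P] fun _ ↦ vstar)
    (hcondc : ∀ t : ℕ, P[c (t + 1) | ℱ t] =ᵐ[P] fun _ ↦ 0)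
    (lam1 lam2 : ℕ → Ω → ℝ)
    (hpred1 : ∀ t : ℕ, StronglyMeasurable[ℱ t] (lam1 (t + 1)))
    (hpred2 : ∀ t : ℕ, StronglyMeasurable[ℱ t] (lam2 (t + 1)))
    (hdom : ∀ᵐ ω ∂P, ∀ t : ℕ,
      1 + lam1 (t + 1) ω * (w (t + 1) ω - 1) +
        lam2 (t + 1) ω * (w (t + 1) ω * r (t + 1) ω - c (t + 1) ω - vstar) ≥ 0)
    (K : ℕ → ℝ → Ω → ℝ)
    (hK : ∀ t v ω, K t v ω = ∏ i ∈ Finset.Icc 1 t,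
      (1 + lam1 i ω * (w i ω - 1) + lam2 i ω * (w i ω * r i ω - c i ω - v)))
    (α : ℝ) (hα : 0 < α) :
    P {ω | ∃ t : ℕ, 1 ≤ t ∧ K t vstar ω > 1 / α} ≤ ENNReal.ofReal α ∧
    P {ω | ∃ t : ℕ, vstar ∉ {v : ℝ | v ∈ V ∧ K t v ω ≤ 1 / α}} ≤ ENNReal.ofReal α ∧
    P {ω | ∃ t : ℕ, vstar ∉ ⋂ i ∈ Set.Iic t, {v : ℝ | v ∈ V ∧ K i v ω ≤ 1 / α}}
      ≤ ENNReal.ofReal α := by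
  have hcross : P {ω | ∃ t, 1 / α < K t vstar ω} ≤ ENNReal.ofReal α := by
    have hKwealth (t : ℕ) (ω : Ω) :
        K t vstar ω = wealth (linearBet lam1 lam2) (rewardPayoff w r c vstar) t ω := by
      simp only [hK, wealth, one_add_linearBet_apply_rewardPayoff]
    have hreach := measure_exists_inv_le_wealth_le
      (H := linearBet lam1 lam2) (Y := rewardPayoff w r c vstar)
      (fun t ↦ stronglyMeasurable_linearBet (hpred1 t) (hpred2 t))
      (fun t ↦ stronglyMeasurable_rewardPayoff (hadapted t).1 (hadapted t).2.1 (hadapted t).2.2)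
      (fun t ↦ integrable_rewardPayoff (hw t) (hwr t) (hc t))
      (fun t ↦ condExp_rewardPayoff_ae_eq_zero (ℱ.le t) (hw t) (hwr t) (hc t) (hcondw t)
        (hcondwr t) (hcondc t))
      (by simpa only [one_add_linearBet_apply_rewardPayoff] using hdom) hα
    simp only [← hKwealth, ← one_div] at hreach
    exact (measure_mono (Set.ofPred_subset_ofPred.mpr fun ω ⟨t, ht⟩ ↦ ⟨t, ht.le⟩)).trans hreach
  have hmiss : P {ω | ∃ t, vstar ∉ {v : ℝ | v ∈ V ∧ K t v ω ≤ 1 / α}} ≤ ENNReal.ofReal α := by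
    simpa [hvstar] using hcross
  refine ⟨?_, hmiss, by simpa only [exists_notMem_biInter_Iic] using hmiss⟩
  exact (measure_mono (Set.ofPred_subset_ofPred.mpr fun ω ⟨t, _, ht⟩ ↦ ⟨t, ht⟩)).trans hcross

theorem reward_predictor_confidence_sequence
    {Ω : Type*} {m0 : MeasurableSpace Ω} {P : Measure Ω} [IsProbabilityMeasure P]
    (wmax : ℝ) (hwmax : 1 ≤ wmax)
    (ℱ : Filtration ℕ m0) (hℱ0 : ℱ 0 = ⊥)
    (w r c : ℕ → Ω → ℝ)
    (hadapted : ∀ t : ℕ, StronglyMeasurable[ℱ (t + 1)] (w (t + 1)) ∧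
      StronglyMeasurable[ℱ (t + 1)] (r (t + 1)) ∧
      StronglyMeasurable[ℱ (t + 1)] (c (t + 1)))
    (hrange : ∀ t : ℕ, ∀ ω, w (t + 1) ω ∈ Set.Icc 0 wmax ∧
      r (t + 1) ω ∈ Set.Icc (0:ℝ) 1 ∧ c (t + 1) ω ∈ Set.Icc (-1) wmax)
    (vstar : ℝ) (hvstar : vstar ∈ Set.Icc (0:ℝ) 1)
    (hcondw : ∀ t : ℕ, P[w (t + 1)|ℱ t] =ᵐ[P] fun _ => 1)
    (hcondwr : ∀ t : ℕ, P[fun ω => w (t + 1) ω * r (t + 1) ω|ℱ t] =ᵐ[P] fun _ => vstar)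
    (hcondc : ∀ t : ℕ, P[c (t + 1)|ℱ t] =ᵐ[P] fun _ => 0)
    (lam1 lam2 : ℕ → Ω → ℝ)
    (hpred1 : ∀ t : ℕ, StronglyMeasurable[ℱ t] (lam1 (t + 1)))
    (hpred2 : ∀ t : ℕ, StronglyMeasurable[ℱ t] (lam2 (t + 1)))
    (hbdd : ∃ C : ℝ, ∀ t ω, |lam1 t ω| ≤ C ∧ |lam2 t ω| ≤ C)
    (hdom : ∀ᵐ ω ∂P, ∀ t : ℕ,
      1 + lam1 (t + 1) ω * (w (t + 1) ω - 1) +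
        lam2 (t + 1) ω * (w (t + 1) ω * r (t + 1) ω - c (t + 1) ω - vstar) ≥ 0)
    (K : ℕ → ℝ → Ω → ℝ)
    (hK : ∀ t v ω, K t v ω = ∏ i ∈ Finset.Icc 1 t,
      (1 + lam1 i ω * (w i ω - 1) + lam2 i ω * (w i ω * r i ω - c i ω - v)))
    (α : ℝ) (hα0 : 0 < α) (hα1 : α ≤ 1) :
    P {ω | ∃ t : ℕ, 1 ≤ t ∧ K t vstar ω > 1 / α} ≤ ENNReal.ofReal α ∧
    P {ω | ∃ t : ℕ, vstar ∉ {v : ℝ | v ∈ Set.Icc (0:ℝ) 1 ∧ K t v ω ≤ 1 / α}}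
      ≤ ENNReal.ofReal α ∧
    P {ω | ∃ t : ℕ, vstar ∉ ⋂ i ∈ Set.Iic t,
        {v : ℝ | v ∈ Set.Icc (0:ℝ) 1 ∧ K i v ω ≤ 1 / α}} ≤ ENNReal.ofReal α := by
  have hwr_mem (t : ℕ) (ω : Ω) : w (t + 1) ω * r (t + 1) ω ∈ Set.Icc 0 wmax :=
    have ⟨⟨hw0, hw1⟩, ⟨hr0, hr1⟩, _⟩ := hrange t ω
    ⟨mul_nonneg hw0 hr0, (mul_le_of_le_one_right hw0 hr1).trans hw1⟩
  exact reward_predictor_confidence_sequence_general ℱ w r c hadapted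
    (fun t ↦ integrable_of_stronglyMeasurable_of_mem_Icc (ℱ.le _) (hadapted t).1
      fun ω ↦ (hrange t ω).1)
    (fun t ↦ integrable_of_stronglyMeasurable_of_mem_Icc (ℱ.le _)
      ((hadapted t).1.mul (hadapted t).2.1) (hwr_mem t))
    (fun t ↦ integrable_of_stronglyMeasurable_of_mem_Icc (ℱ.le _) (hadapted t).2.2
      fun ω ↦ (hrange t ω).2.2)
    (Set.Icc 0 1) vstar hvstar hcondw hcondwr hcondc lam1 lam2 hpred1 hpred2 hdom K hK α hα0
end

section
/- Fix w_max ≥ 1, v ∈ [0,1], and λ₂ ∈ ℝ. Define g(λ₁) = min{ 1 + λ₁(w_max − 1) + λ₂(w_max − v), 1 + λ₁(w_max − 1) − λ₂·v, 1 − λ₁ − λ₂·v }. Then g is maximized over λ₁ ∈ ℝ at λ₁* = max(−λ₂, 0); that is, for all λ₁ ∈ ℝ, g(λ₁) ≤ g(max(−λ₂, 0)). Moreover the maximal value is 1 − λ₂·v when λ₂ ≥ 0 and 1 − λ₂·v + λ₂ when λ₂ ≤ 0. -/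
/-!
The minimum over the first two outcomes is `1 - λ₂v + λ₁(wmax - 1) - max(-λ₂, 0)wmax`, which is
nondecreasing in `λ₁` because `1 ≤ wmax`, while the third outcome gives `1 - λ₁ - λ₂v`, which is
decreasing. The minimum of a nondecreasing and a nonincreasing function is maximal where the two
agree, here at `λ₁ = max(-λ₂, 0)`, and the common value there is `1 - λ₂v - max(-λ₂, 0)`.
-/

theorem inf_le_inf_of_monotone_of_antitone_of_eq {α β : Type*} [LinearOrder α] [SemilatticeInf β]
    {f g : α → β} {a : α} (hf : Monotone f) (hg : Antitone g) (hfg : f a = g a) (x : α) :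
    f x ⊓ g x ≤ f a ⊓ g a := by
  rcases le_total x a with hxa | hax
  · exact inf_le_left.trans (le_inf (hf hxa) (hfg ▸ hf hxa))
  · exact inf_le_right.trans (le_inf (hfg ▸ hg hax) (hg hax))

section WorstCase

variable {R : Type*} [CommRing R] [LinearOrder R]

/-- The smallest value of the one-step wealth multiplier `1 + λ₁(w - 1) + λ₂(wr - v)` over the
outcomes `(w, r) = (wmax, 1)`, `(w, r) = (wmax, 0)` and `w = 0`, as a function of the bet `lam1`. -/
def worstCaseMultiplier (wmax v lam2 lam1 : R) : R :=
  min (min (1 + lam1 * (wmax - 1) + lam2 * (wmax - v)) (1 + lam1 * (wmax - 1) - lam2 * v))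
    (1 - lam1 - lam2 * v)

variable [IsOrderedRing R] {wmax : R}

theorem worstCaseMultiplier_eq_min (hwmax : 0 ≤ wmax) (v lam2 lam1 : R) :
    worstCaseMultiplier wmax v lam2 lam1 =
      min (1 - lam2 * v + lam1 * (wmax - 1) - max (-lam2) 0 * wmax) (1 - lam1 - lam2 * v) := by
  have payoff_min : min (lam2 * wmax) 0 = -(max (-lam2) 0 * wmax) := by
    rw [max_mul_of_nonneg _ _ hwmax, ← min_neg_neg, neg_mul, neg_neg, zero_mul, neg_zero]
  rw [worstCaseMultiplier, sub_eq_add_neg _ (max (-lam2) 0 * wmax), ← payoff_min,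
    ← min_add_add_left]
  ring_nf

theorem worstCaseMultiplier_max_neg_zero (hwmax : 0 ≤ wmax) (v lam2 : R) :
    worstCaseMultiplier wmax v lam2 (max (-lam2) 0) = 1 - lam2 * v - max (-lam2) 0 := by
  rw [worstCaseMultiplier_eq_min hwmax, min_eq_left (le_of_eq (by ring))]
  ring

theorem worstCaseMultiplier_le_max_neg_zero (hwmax : 1 ≤ wmax) (v lam2 lam1 : R) :
    worstCaseMultiplier wmax v lam2 lam1 ≤ worstCaseMultiplier wmax v lam2 (max (-lam2) 0) := by
  have wmax_nonneg : 0 ≤ wmax := zero_le_one.trans hwmax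
  have first_two_monotone : Monotone fun x : R ↦
      1 - lam2 * v + x * (wmax - 1) - max (-lam2) 0 * wmax := fun x y hxy ↦ by
    have : 0 ≤ wmax - 1 := sub_nonneg.2 hwmax
    dsimp only
    gcongr
  have third_antitone : Antitone fun x : R ↦ 1 - x - lam2 * v := fun x y hxy ↦ by
    dsimp only
    gcongr
  simp only [worstCaseMultiplier_eq_min wmax_nonneg]
  exact inf_le_inf_of_monotone_of_antitone_of_eq first_two_monotone third_antitone (by ring) lam1

theorem worst_case_lambda1_general (hwmax : 1 ≤ wmax) (v lam2 : R) :
    (∀ lam1 : R,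
      worstCaseMultiplier wmax v lam2 lam1 ≤ worstCaseMultiplier wmax v lam2 (max (-lam2) 0)) ∧
    (0 ≤ lam2 → worstCaseMultiplier wmax v lam2 (max (-lam2) 0) = 1 - lam2 * v) ∧
    (lam2 ≤ 0 → worstCaseMultiplier wmax v lam2 (max (-lam2) 0) = 1 - lam2 * v + lam2) := by
  have optimal_value := worstCaseMultiplier_max_neg_zero (zero_le_one.trans hwmax) v lam2
  refine ⟨worstCaseMultiplier_le_max_neg_zero hwmax v lam2, fun hlam2 ↦ ?_, fun hlam2 ↦ ?_⟩
  · rw [optimal_value, max_eq_right (neg_nonpos.2 hlam2), sub_zero]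
  · rw [optimal_value, max_eq_left (neg_nonneg.2 hlam2), sub_neg_eq_add]

end WorstCase

theorem worst_case_lambda1 (wmax v lam2 : ℝ) (hwmax : 1 ≤ wmax)
    (hv : v ∈ Set.Icc (0:ℝ) 1) :
    (∀ lam1 : ℝ,
      min (min (1 + lam1 * (wmax - 1) + lam2 * (wmax - v))
               (1 + lam1 * (wmax - 1) - lam2 * v))
          (1 - lam1 - lam2 * v)
      ≤ min (min (1 + max (-lam2) 0 * (wmax - 1) + lam2 * (wmax - v))
               (1 + max (-lam2) 0 * (wmax - 1) - lam2 * v))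
          (1 - max (-lam2) 0 - lam2 * v)) ∧
    (0 ≤ lam2 →
      min (min (1 + max (-lam2) 0 * (wmax - 1) + lam2 * (wmax - v))
               (1 + max (-lam2) 0 * (wmax - 1) - lam2 * v))
          (1 - max (-lam2) 0 - lam2 * v) = 1 - lam2 * v) ∧
    (lam2 ≤ 0 →
      min (min (1 + max (-lam2) 0 * (wmax - 1) + lam2 * (wmax - v))
               (1 + max (-lam2) 0 * (wmax - 1) - lam2 * v))
          (1 - max (-lam2) 0 - lam2 * v) = 1 - lam2 * v + lam2) :=
  worst_case_lambda1_general hwmax v lam2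
end

section
/- Fix w_max ≥ 1 and, for v ∈ [0,1], define D_v^{1/2} = {(λ₁, λ₂) ∈ ℝ² : 1 + λ₁(w − 1) + λ₂(w·r − v) ≥ 1/2 for all (w, r) ∈ {0, w_max} × {0, 1}}. Then {(λ₁,λ₂) : λ₂ ≥ 0} ∩ ⋂_{v ∈ [0,1]} D_v^{1/2} = {(λ₁, λ₂) : λ₂ ≥ 0, λ₁ + λ₂ ≤ 1/2, λ₁(1 − w_max) + λ₂ ≤ 1/2}. In particular, this set 𝒞 satisfies 𝒞 ⊆ D_v^{1/2} for every v ∈ [0,1]. -/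
/-!
For `λ₂, w ≥ 0` the wealth multiplier increases with the reward `r` and decreases with the candidate
value `v`. Hence `r = 0` and `v = 1` are the worst case, where the multiplier equals
`1 - (λ₁ (1 - w) + λ₂)`, and `w = 0` and `w = wmax` give the two remaining linear constraints.
-/

open Set

section WealthMultiplier

variable {R : Type*} [Ring R]

/-- The factor by which the bet `p = (λ₁, λ₂)` against the candidate value `v` multiplies the
wealth when the weight `w` and the reward `r` are observed. -/
def wealthMultiplier (p : R × R) (v w r : R) : R :=
  1 + p.1 * (w - 1) + p.2 * (w * r - v)

theorem wealthMultiplier_zero_reward (p : R × R) (v w : R) :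
    wealthMultiplier p v w 0 = 1 - (p.1 * (1 - w) + p.2 * v) := by
  unfold wealthMultiplier
  noncomm_ring

variable [PartialOrder R]

/-- The set `D_v^m` of bets whose wealth multiplier is at least `m` at each extreme outcome
`(w, r) ∈ {0, wmax} × {0, 1}`. -/
def feasibleBets (wmax m v : R) : Set (R × R) :=
  {p | ∀ w ∈ ({0, wmax} : Set R), ∀ r ∈ ({0, 1} : Set R), m ≤ wealthMultiplier p v w r}

/-- The region `𝒞`, at a general threshold `m`, from which a single bet can be chosen for all
candidate values in `[0, 1]` at once, given by its linear constraints. -/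
def commonFeasibleBets (wmax m : R) : Set (R × R) :=
  {p | 0 ≤ p.2 ∧ p.1 + p.2 ≤ 1 - m ∧ p.1 * (1 - wmax) + p.2 ≤ 1 - m}

variable [IsOrderedRing R] {p : R × R} {wmax m v v' w : R}

theorem monotone_wealthMultiplier_reward (hp : 0 ≤ p.2) (hw : 0 ≤ w) :
    Monotone (wealthMultiplier p v w) := by
  intro r r' hr
  unfold wealthMultiplier
  gcongr

theorem antitone_wealthMultiplier_value (hp : 0 ≤ p.2) (w r : R) :
    Antitone fun v ↦ wealthMultiplier p v w r := by
  intro v v' hv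
  simp only [wealthMultiplier]
  gcongr

theorem mem_feasibleBets_of_le (hp : 0 ≤ p.2) (hv : v ≤ v') (h : p ∈ feasibleBets wmax m v') :
    p ∈ feasibleBets wmax m v :=
  fun w hw r hr ↦ (h w hw r hr).trans (antitone_wealthMultiplier_value hp w r hv)

theorem mem_feasibleBets_iff_zero_reward (hwmax : 0 ≤ wmax) (hp : 0 ≤ p.2) :
    p ∈ feasibleBets wmax m v ↔ ∀ w ∈ ({0, wmax} : Set R), m ≤ wealthMultiplier p v w 0 := by
  refine ⟨fun h w hw ↦ h w hw 0 (mem_insert 0 _), fun h w hw r hr ↦ ?_⟩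
  have hw_nonneg : 0 ≤ w := by
    rcases hw with rfl | rfl
    exacts [le_rfl, hwmax]
  have hr_nonneg : 0 ≤ r := by
    rcases hr with rfl | rfl
    exacts [le_rfl, zero_le_one]
  exact (h w hw).trans (monotone_wealthMultiplier_reward hp hw_nonneg hr_nonneg)

theorem mem_feasibleBets_iff (hwmax : 0 ≤ wmax) (hp : 0 ≤ p.2) :
    p ∈ feasibleBets wmax m v ↔
      p.1 + p.2 * v ≤ 1 - m ∧ p.1 * (1 - wmax) + p.2 * v ≤ 1 - m := by
  rw [mem_feasibleBets_iff_zero_reward hwmax hp]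
  simp only [wealthMultiplier_zero_reward, le_sub_comm (a := m), mem_insert_iff,
    mem_singleton_iff, forall_eq_or_imp, forall_eq, sub_zero, mul_one]

theorem nonneg_inter_iInter_feasibleBets {S : Set R} (hS : IsGreatest S v) :
    {p : R × R | 0 ≤ p.2} ∩ ⋂ u ∈ S, feasibleBets wmax m u =
      {p : R × R | 0 ≤ p.2} ∩ feasibleBets wmax m v := by
  ext p
  refine and_congr_right fun hp ↦ ⟨fun h ↦ mem_iInter₂.mp h v hS.1, fun h ↦ ?_⟩
  exact mem_iInter₂.mpr fun u hu ↦ mem_feasibleBets_of_le hp (hS.2 hu) h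

theorem nonneg_inter_feasibleBets_one (hwmax : 0 ≤ wmax) :
    {p : R × R | 0 ≤ p.2} ∩ feasibleBets wmax m 1 = commonFeasibleBets wmax m := by
  ext p
  refine and_congr_right fun hp ↦ ?_
  simpa only [mul_one] using mem_feasibleBets_iff hwmax hp (v := 1)

theorem common_feasible_region_general (hwmax : 0 ≤ wmax) :
    {p : R × R | 0 ≤ p.2} ∩ ⋂ v ∈ Icc (0 : R) 1, feasibleBets wmax m v =
        commonFeasibleBets wmax m ∧
      ∀ v ∈ Icc (0 : R) 1, commonFeasibleBets wmax m ⊆ feasibleBets wmax m v := by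
  have h_eq : {p : R × R | 0 ≤ p.2} ∩ ⋂ v ∈ Icc (0 : R) 1, feasibleBets wmax m v =
      commonFeasibleBets wmax m :=
    (nonneg_inter_iInter_feasibleBets (isGreatest_Icc zero_le_one)).trans
      (nonneg_inter_feasibleBets_one hwmax)
  exact ⟨h_eq, fun v hv ↦ h_eq ▸ inter_subset_right.trans (biInter_subset_of_mem hv)⟩

end WealthMultiplier

theorem common_feasible_region (wmax : ℝ) (hwmax : 1 ≤ wmax) :
    ({p : ℝ × ℝ | 0 ≤ p.2} ∩
      ⋂ v ∈ Set.Icc (0:ℝ) 1,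
        {p : ℝ × ℝ | ∀ w ∈ ({0, wmax} : Set ℝ), ∀ r ∈ ({0, 1} : Set ℝ),
          1 + p.1 * (w - 1) + p.2 * (w * r - v) ≥ 1 / 2} :
      Set (ℝ × ℝ)) =
    {p : ℝ × ℝ | 0 ≤ p.2 ∧ p.1 + p.2 ≤ 1 / 2 ∧ p.1 * (1 - wmax) + p.2 ≤ 1 / 2} ∧
    ∀ v ∈ Set.Icc (0:ℝ) 1,
      {p : ℝ × ℝ | 0 ≤ p.2 ∧ p.1 + p.2 ≤ 1 / 2 ∧ p.1 * (1 - wmax) + p.2 ≤ 1 / 2} ⊆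
        {p : ℝ × ℝ | ∀ w ∈ ({0, wmax} : Set ℝ), ∀ r ∈ ({0, 1} : Set ℝ),
          1 + p.1 * (w - 1) + p.2 * (w * r - v) ≥ 1 / 2} := by
  simpa only [commonFeasibleBets, feasibleBets, wealthMultiplier, sub_half] using
    common_feasible_region_general (m := (1 / 2 : ℝ)) (zero_le_one.trans hwmax)
end

section
/- Fix w_max ≥ 1, m ≤ 1, and set W = w_max − 1. For v ∈ [0,1] define G_v^m = {(λ₁, λ₂) ∈ ℝ² : 1 + λ₁(w − 1) + λ₂(w·r − r − v) ≥ m for all (w, r) ∈ {0, w_max} × {0, 1}}. Then ⋂_{v ∈ [0,1]} G_v^m = {(λ₁, λ₂) : −λ₁ − 2λ₂ ≥ m − 1, −λ₁ ≥ m − 1, W·λ₁ − λ₂ ≥ m − 1, W·λ₁ + W·λ₂ ≥ m − 1}. -/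
/-!
For fixed `w`, the multiplier is affine in `x = w * r - r - v`, the coefficient of the second bet.
An affine function is bounded below on a set with a least and a greatest element as soon as it is
so at these two extremes. With `W = w - 1`, they are `-(1 + W⁻)` (at `v = 1`) and `W⁺` (at `v = 0`),
so each `w` contributes exactly two constraints.
-/

namespace GatedDeployment

section AffineBound

variable {R : Type*} [Ring R] [LinearOrder R] [IsOrderedRing R]

theorem forall_le_add_mul_iff_of_isLeast_of_isGreatest {s : Set R} {l u : R}
    (hl : IsLeast s l) (hu : IsGreatest s u) (c a b : R) :
    (∀ x ∈ s, c ≤ a + b * x) ↔ c ≤ a + b * l ∧ c ≤ a + b * u := by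
  refine ⟨fun h ↦ ⟨h l hl.1, h u hu.1⟩, fun ⟨h_least, h_greatest⟩ x hx ↦ ?_⟩
  rcases le_total 0 b with hb | hb
  · have hlx : b * l ≤ b * x := mul_le_mul_of_nonneg_left (hl.2 hx) hb
    exact h_least.trans (by gcongr)
  · have hux : b * u ≤ b * x := mul_le_mul_of_nonpos_left (hu.2 hx) hb
    exact h_greatest.trans (by gcongr)

end AffineBound

variable {R : Type*} [CommRing R]

/-- The per-step multiplier of the gated-deployment wealth process for the bets
`p = (λ₁, λ₂)`, the observation `(w, r)` and the candidate value `v`. -/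
def multiplier (p : R × R) (w r v : R) : R :=
  1 + p.1 * (w - 1) + p.2 * (w * r - r - v)

section Region

variable [Preorder R]

/-- The region `G_v^m` of bets whose multiplier at the candidate value `v` is at least `m`, for
`w` in an arbitrary set `S` and `r ∈ {0, 1}`; the paper has `S = {0, w_max}`. -/
def feasibleRegion (S : Set R) (m v : R) : Set (R × R) :=
  {p | ∀ w ∈ S, ∀ r ∈ ({0, 1} : Set R), multiplier p w r v ≥ m}

/-- The values taken by the coefficient `w * r - r - v` of the second bet as `v` ranges over
`[0, 1]` and `r` over `{0, 1}`. -/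
def exposures (w : R) : Set R :=
  Set.image2 (fun v r ↦ w * r - r - v) (Set.Icc 0 1) {0, 1}

theorem mem_iInter_feasibleRegion_iff_forall_exposures {S : Set R} {m : R} {p : R × R} :
    p ∈ ⋂ v ∈ Set.Icc (0 : R) 1, feasibleRegion S m v ↔
      ∀ w ∈ S, ∀ x ∈ exposures w, m ≤ 1 + p.1 * (w - 1) + p.2 * x := by
  simp only [Set.mem_iInter₂, feasibleRegion, multiplier, exposures, Set.mem_ofPred_eq,
    Set.forall_mem_image2, ge_iff_le]
  exact ⟨fun h w hw v hv ↦ h v hv w hw, fun h v hv w hw ↦ h w hw v hv⟩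

end Region

variable [LinearOrder R] [IsStrictOrderedRing R]

theorem isLeast_exposures (w : R) : IsLeast (exposures w) (-(1 + (w - 1)⁻)) := by
  constructor
  · rcases le_total 0 (w - 1) with hW | hW
    · exact ⟨1, by simp, 0, by simp, by simp [negPart_eq_zero.2 hW]⟩
    · exact ⟨1, by simp, 1, by simp, by rw [negPart_eq_neg.2 hW]; ring⟩
  · rintro _ ⟨v, ⟨-, hv⟩, r, rfl | rfl, rfl⟩
    · linarith [negPart_nonneg (w - 1)]
    · linarith [neg_le_negPart (w - 1)]

theorem isGreatest_exposures (w : R) : IsGreatest (exposures w) (w - 1)⁺ := by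
  constructor
  · rcases le_total 0 (w - 1) with hW | hW
    · exact ⟨0, by simp, 1, by simp, by simp [posPart_eq_self.2 hW]⟩
    · exact ⟨0, by simp, 0, by simp, by simp [posPart_eq_zero.2 hW]⟩
  · rintro _ ⟨v, ⟨hv, -⟩, r, rfl | rfl, rfl⟩
    · linarith [posPart_nonneg (w - 1)]
    · linarith [le_posPart (w - 1)]

end GatedDeployment

open GatedDeployment in
theorem gated_feasible_region_general {R : Type*} [CommRing R] [LinearOrder R]
    [IsStrictOrderedRing R] (S : Set R) (m : R) :
    ⋂ v ∈ Set.Icc (0 : R) 1, feasibleRegion S m v =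
      {p | ∀ w ∈ S, (w - 1) * p.1 - (1 + (w - 1)⁻) * p.2 ≥ m - 1 ∧
        (w - 1) * p.1 + (w - 1)⁺ * p.2 ≥ m - 1} := by
  ext p
  rw [mem_iInter_feasibleRegion_iff_forall_exposures]
  refine forall₂_congr fun w _ ↦ ?_
  rw [forall_le_add_mul_iff_of_isLeast_of_isGreatest (isLeast_exposures w)
    (isGreatest_exposures w)]
  constructor <;> rintro ⟨h_least, h_greatest⟩ <;> constructor <;> linarith

theorem gated_feasible_region (wmax m : ℝ) (hwmax : 1 ≤ wmax) (hm : m ≤ 1) :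
    (⋂ v ∈ Set.Icc (0:ℝ) 1,
      {p : ℝ × ℝ | ∀ w ∈ ({0, wmax} : Set ℝ), ∀ r ∈ ({0, 1} : Set ℝ),
        1 + p.1 * (w - 1) + p.2 * (w * r - r - v) ≥ m} : Set (ℝ × ℝ)) =
    {p : ℝ × ℝ | -p.1 - 2 * p.2 ≥ m - 1 ∧ -p.1 ≥ m - 1 ∧
      (wmax - 1) * p.1 - p.2 ≥ m - 1 ∧ (wmax - 1) * p.1 + (wmax - 1) * p.2 ≥ m - 1} := by
  refine (gated_feasible_region_general {0, wmax} m).trans (Set.ext fun p ↦ ?_)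
  simp [hwmax, and_assoc, one_add_one_eq_two]
end
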